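/- arXiv:1810.07840 — 2 statements merged into one kernel-verified Lean document; each statement's English description precedes it below -/
import Mathlib

section
/- Let μ ≥ 0, let Ω ⊆ ℝⁿ be open, f bounded and continuous, Q continuous and nonnegative. Let u be a viscosity solution in Ω of the one-phase free boundary problem |∇u|^μ Δu = f in Ω⁺(u), |∇u| = Q on F(u), and let v be a strict comparison subsolution of the same problem in Ω. If u ≥ v⁺ in Ω, then u > v⁺ on Ω⁺(v) ∪ F(v). -/
open Metric Set Filter
open scoped RealInnerProductSpace Topology

noncomputable section

abbrev E (n : ℕ) : Type := EuclideanSpace ℝ (Fin n)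

/-- Laplacian: trace of the second derivative. -/
def lap {n : ℕ} (φ : E n → ℝ) (x : E n) : ℝ :=
  ∑ i : Fin n, iteratedFDeriv ℝ 2 φ x ![EuclideanSpace.single i 1, EuclideanSpace.single i 1]

def TouchesBelow {n : ℕ} (u φ : E n → ℝ) (x₀ : E n) : Prop :=
  u x₀ = φ x₀ ∧ ∀ᶠ x in 𝓝 x₀, φ x ≤ u x

def TouchesAbove {n : ℕ} (u φ : E n → ℝ) (x₀ : E n) : Prop :=
  u x₀ = φ x₀ ∧ ∀ᶠ x in 𝓝 x₀, u x ≤ φ x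

def posSet {n : ℕ} (Ω : Set (E n)) (u : E n → ℝ) : Set (E n) := {x ∈ Ω | 0 < u x}

def freeBdry {n : ℕ} (Ω : Set (E n)) (u : E n → ℝ) : Set (E n) := frontier (posSet Ω u) ∩ Ω

/-- Viscosity solution of `|∇u|^μ Δu = f` in `Ω⁺(u)`, `|∇u| = Q` on `F(u)`. -/
def ViscSol {n : ℕ} (μ : ℝ) (Ω : Set (E n)) (f Q u : E n → ℝ) : Prop :=
  (∀ φ : E n → ℝ, ContDiff ℝ 2 φ → ∀ x₀ ∈ posSet Ω u,
      (TouchesBelow u φ x₀ → ‖gradient φ x₀‖ ^ μ * lap φ x₀ ≤ f x₀) ∧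
      (TouchesAbove u φ x₀ → f x₀ ≤ ‖gradient φ x₀‖ ^ μ * lap φ x₀)) ∧
  (∀ φ : E n → ℝ, ContDiff ℝ 2 φ → ∀ x₀ ∈ freeBdry Ω u, gradient φ x₀ ≠ 0 →
      (TouchesBelow u (fun x => max (φ x) 0) x₀ → ‖gradient φ x₀‖ ≤ Q x₀) ∧
      (TouchesAbove u (fun x => max (φ x) 0) x₀ → Q x₀ ≤ ‖gradient φ x₀‖))

/-- `S` is a `C^{1,β}` graph in `B`. -/
def IsC1GraphIn {n : ℕ} (β : ℝ) (S B : Set (E n)) : Prop :=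
  ∃ ν : E n, ‖ν‖ = 1 ∧
    ∃ g : ((ℝ ∙ ν)ᗮ : Submodule ℝ (E n)) → ℝ,
      Differentiable ℝ g ∧
      (∃ K : ℝ, ∀ y z : ((ℝ ∙ ν)ᗮ : Submodule ℝ (E n)),
        ‖gradient g y - gradient g z‖ ≤ K * ‖(y : E n) - (z : E n)‖ ^ β) ∧
      S ∩ B = {x ∈ B | ⟪x, ν⟫ = g (Submodule.orthogonalProjectionOnto (ℝ ∙ ν)ᗮ x)}


/-- Strict comparison subsolution of the one-phase free boundary problem. -/
def StrictCompSubsol {n : ℕ} (μ : ℝ) (Ω : Set (E n)) (f Q v : E n → ℝ) : Prop :=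
  ContinuousOn v Ω ∧
  ContDiffOn ℝ 2 v (closure (posSet Ω v)) ∧
  (∀ x ∈ posSet Ω v, f x < ‖gradient v x‖ ^ μ * lap v x) ∧
  (∀ x ∈ freeBdry Ω v, Q x < ‖gradient v x‖)

/-!
If `u` and `v⁺` touch at a point of `Ω⁺(v)`, then `v`, multiplied by a cutoff, is a test function
touching `u` from below there, and `G1` contradicts `F1`.

If they touch at `x₀ ∈ F(v)`, then `v x₀ = u x₀ = 0` and `x₀ ∈ F(u)`, but `v` is `C²` only up to the
boundary of `Ω⁺(v)` and is not itself a test function. It is replaced by the quadratic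
`φ x = D(x - x₀) - (C / 2) ‖x - x₀‖²` with `D = Dv(x₀) ≠ 0`. As `v` is `C²` up to the boundary,
`‖Dv(y) - D‖ ≤ C ‖y - x₀‖` for `y` near `x₀` in `Ω⁺(v)`, so along a segment from `x₀` to a point
where `φ > 0` the derivative of `v` dominates that of `φ` as long as `v > 0`; since `φ > 0` along
the segment, `v` stays positive and `φ ≤ v`. Hence `φ⁺ ≤ v⁺ ≤ u` near `x₀`, and `G2` contradicts
`F2`.
-/

lemma le_of_hasDerivAt_le {g h g' h' : ℝ → ℝ} {a b : ℝ} (hab : a ≤ b)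
    (hg : ContinuousOn g (Icc a b)) (hh : ContinuousOn h (Icc a b)) (hha : h a ≤ g a)
    (hg' : ∀ t ∈ Ioo a b, HasDerivAt g (g' t) t) (hh' : ∀ t ∈ Ioo a b, HasDerivAt h (h' t) t)
    (hle : ∀ t ∈ Ioo a b, h' t ≤ g' t) : h b ≤ g b := by
  have hmono : MonotoneOn (fun t => g t - h t) (Icc a b) := by
    refine monotoneOn_of_hasDerivWithinAt_nonneg (f' := fun t => g' t - h' t)
      (convex_Icc a b) (hg.sub hh) ?_ ?_ <;> rw [interior_Icc] <;> intro t ht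
    · exact ((hg' t ht).sub (hh' t ht)).hasDerivWithinAt
    · exact sub_nonneg.2 (hle t ht)
  have := hmono (left_mem_Icc.2 hab) (right_mem_Icc.2 hab) hab
  linarith

lemma le_of_hasDerivAt_le_of_pos {g h g' h' : ℝ → ℝ} {a b : ℝ}
    (hg : ContinuousOn g (Icc a b)) (hh : ContinuousOn h (Icc a b)) (hha : h a ≤ g a)
    (hg_pos : ∀ᶠ t in 𝓝[>] a, 0 < g t) (hh_pos : ∀ t ∈ Ioo a b, 0 < h t)
    (hg' : ∀ t ∈ Ioo a b, 0 < g t → HasDerivAt g (g' t) t)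
    (hh' : ∀ t ∈ Ioo a b, HasDerivAt h (h' t) t)
    (hle : ∀ t ∈ Ioo a b, 0 < g t → h' t ≤ g' t) :
    ∀ t ∈ Icc a b, h t ≤ g t := by
  have hclosed : IsClosed ({t | h t ≤ g t} ∩ Icc a b) := by
    rw [inter_comm]
    exact isClosed_Icc.isClosed_le hh hg
  refine hclosed.Icc_subset_of_forall_exists_gt hha fun s ⟨hhs, hs⟩ y hy => ?_
  have hpos : ∀ᶠ t in 𝓝[>] s, 0 < g t := by
    rcases hs.1.eq_or_lt with rfl | has
    · exact hg_pos
    · have hcont := (hg s (Ico_subset_Icc_self hs)).continuousAt (Icc_mem_nhds has hs.2)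
      exact nhdsWithin_le_nhds
        (hcont.eventually (lt_mem_nhds ((hh_pos s ⟨has, hs.2⟩).trans_le hhs)))
  obtain ⟨c, hsc, hc⟩ := mem_nhdsGT_iff_exists_Ioo_subset.1 hpos
  obtain ⟨t, hst, ht⟩ := exists_between (lt_min (lt_min hsc hy) hs.2)
  rw [lt_min_iff, lt_min_iff] at ht
  obtain ⟨⟨htc, hty⟩, htb⟩ := ht
  have hg_pos_Ioo : ∀ r ∈ Ioo s t, 0 < g r := fun r hr => hc ⟨hr.1, hr.2.trans htc⟩
  have hIcc : Icc s t ⊆ Icc a b := Icc_subset_Icc hs.1 htb.le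
  have hIoo : Ioo s t ⊆ Ioo a b := Ioo_subset_Ioo hs.1 htb.le
  exact ⟨t, le_of_hasDerivAt_le hst.le (hg.mono hIcc) (hh.mono hIcc) hhs
    (fun r hr => hg' r (hIoo hr) (hg_pos_Ioo r hr)) (fun r hr => hh' r (hIoo hr))
    (fun r hr => hle r (hIoo hr) (hg_pos_Ioo r hr)), hst, hty.le⟩

section NormedSpace

variable {F G : Type*} [NormedAddCommGroup F] [NormedSpace ℝ F]
  [NormedAddCommGroup G] [NormedSpace ℝ G]
  {v : F → ℝ} {v' : F → F →L[ℝ] ℝ} {D : F →L[ℝ] ℝ} {S : Set F} {x₀ : F} {C r : ℝ}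

lemma eventually_pos_add_smul (hD : HasFDerivAt v D x₀) (hv₀ : v x₀ = 0) {w : F}
    (hw : 0 < D w) : ∀ᶠ t in 𝓝[>] (0 : ℝ), 0 < v (x₀ + t • w) := by
  have hslope := (hD.hasLineDerivAt w).tendsto_slope_zero_right
  filter_upwards [hslope.eventually (lt_mem_nhds hw), self_mem_nhdsWithin] with t hpos ht
  rw [hv₀, sub_zero, smul_eq_mul] at hpos
  exact pos_of_mul_pos_right hpos (inv_pos.2 ht).le

lemma uniqueDiffWithinAt_setOf_pos (hD : HasFDerivAt v D x₀) (hv₀ : v x₀ = 0) (hD₀ : D ≠ 0) :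
    UniqueDiffWithinAt ℝ {x | 0 < v x} x₀ := by
  have hcone : {w | 0 < D w} ⊆ tangentConeAt ℝ {x | 0 < v x} x₀ := fun w hw =>
    mem_tangentConeAt_of_add_smul_mem (c := id) (tendsto_id.mono_left (nhdsGT_le_nhdsNE 0))
      (eventually_pos_add_smul hD hv₀ hw)
  obtain ⟨e, he⟩ : ∃ e, 0 < D e := by
    obtain ⟨e, he⟩ := DFunLike.ne_iff.1 hD₀
    rcases lt_or_gt_of_ne he with h | h
    · exact ⟨-e, by simpa using h⟩
    · exact ⟨e, h⟩
  have hspan : Submodule.span ℝ {w | 0 < D w} = ⊤ :=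
    Submodule.eq_top_of_nonempty_interior' _ ⟨e, mem_interior.2
      ⟨_, Submodule.subset_span, isOpen_lt continuous_const D.continuous, he⟩⟩
  refine ⟨?_, mem_closure_of_nonempty_tangentConeAt ⟨e, hcone he⟩⟩
  rw [top_le_iff.1 (hspan.ge.trans (Submodule.span_mono hcone))]
  exact dense_univ

lemma exists_eventually_hasFDerivWithinAt_norm_sub_le {g : F → G}
    (hg : ContDiffWithinAt ℝ 2 g S x₀) (hx₀ : x₀ ∈ S) :
    ∃ (g' : F → F →L[ℝ] G) (C : ℝ), 0 ≤ C ∧ ∀ᶠ y in 𝓝[S] x₀,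
      HasFDerivWithinAt g (g' y) S y ∧ ‖g' y - g' x₀‖ ≤ C * ‖y - x₀‖ := by
  have hg_succ : ContDiffWithinAt ℝ (1 + 1) g S x₀ := hg.of_le (by norm_num)
  rw [contDiffWithinAt_succ_iff_hasFDerivWithinAt' (by simp), insert_eq_of_mem hx₀] at hg_succ
  obtain ⟨U, hU, -, -, g', hg', hg'_diff⟩ := hg_succ
  obtain ⟨C, hC, hbound⟩ :=
    (hg'_diff.differentiableWithinAt one_ne_zero).isBigO_sub.exists_nonneg
  exact ⟨g', C, hC, (eventually_of_mem hU hg').and hbound.bound⟩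

/-- The lower barrier at `x₀` with differential `D` and opening `C`: an affine function vanishing
at `x₀` minus a paraboloid. Its positive part is the test function that touches at free boundary
points. -/
def quadraticBarrier (D : F →L[ℝ] ℝ) (C : ℝ) (x₀ x : F) : ℝ :=
  D (x - x₀) - C / 2 * ‖x - x₀‖ ^ 2

@[simp]
lemma quadraticBarrier_self : quadraticBarrier D C x₀ x₀ = 0 := by
  simp [quadraticBarrier]

lemma quadraticBarrier_add_smul (w : F) (t : ℝ) :
    quadraticBarrier D C x₀ (x₀ + t • w) = t * D w - C / 2 * ‖w‖ ^ 2 * t ^ 2 := by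
  simp only [quadraticBarrier, add_sub_cancel_left, map_smul, smul_eq_mul, norm_smul, mul_pow,
    Real.norm_eq_abs, sq_abs]
  ring

lemma hasDerivAt_quadraticBarrier_add_smul (w : F) (t : ℝ) :
    HasDerivAt (fun t : ℝ => quadraticBarrier D C x₀ (x₀ + t • w))
      (D w - C * ‖w‖ ^ 2 * t) t := by
  simp only [quadraticBarrier_add_smul]
  exact (((hasDerivAt_id t).mul_const (D w)).sub
    ((hasDerivAt_pow 2 t).const_mul (C / 2 * ‖w‖ ^ 2))).congr_deriv (by push_cast; ring)

lemma quadraticBarrier_add_smul_pos (hC : 0 ≤ C) {w : F}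
    (hw : 0 < quadraticBarrier D C x₀ (x₀ + w)) {t : ℝ} (ht : t ∈ Ioc (0 : ℝ) 1) :
    0 < quadraticBarrier D C x₀ (x₀ + t • w) := by
  have hDw : C / 2 * ‖w‖ ^ 2 < D w := by simpa [quadraticBarrier] using hw
  have hCt : C / 2 * ‖w‖ ^ 2 * t ≤ C / 2 * ‖w‖ ^ 2 := mul_le_of_le_one_right (by positivity) ht.2
  rw [quadraticBarrier_add_smul]
  calc 0 < t * (D w - C / 2 * ‖w‖ ^ 2 * t) := mul_pos ht.1 (by linarith)
    _ = t * D w - C / 2 * ‖w‖ ^ 2 * t ^ 2 := by ring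

lemma sub_le_apply_of_norm_sub_le {L : F →L[ℝ] ℝ} {w : F} {t : ℝ} (ht : 0 ≤ t)
    (hL : ‖L - D‖ ≤ C * ‖t • w‖) : D w - C * ‖w‖ ^ 2 * t ≤ L w := by
  have hop : |L w - D w| ≤ C * ‖t • w‖ * ‖w‖ := (L - D).le_of_opNorm_le hL w
  rw [norm_smul, Real.norm_of_nonneg ht] at hop
  linarith [(abs_le.1 hop).1]

lemma quadraticBarrier_le_of_norm_fderiv_sub_le (hC : 0 ≤ C) (hv : ContinuousOn v (ball x₀ r))
    (hD : HasFDerivAt v D x₀) (hv₀ : v x₀ = 0)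
    (hv' : ∀ y ∈ ball x₀ r, 0 < v y → HasFDerivAt v (v' y) y ∧ ‖v' y - D‖ ≤ C * ‖y - x₀‖)
    {x : F} (hx : x ∈ ball x₀ r) (hpos : 0 < quadraticBarrier D C x₀ x) :
    quadraticBarrier D C x₀ x ≤ v x := by
  obtain ⟨w, rfl⟩ : ∃ w, x = x₀ + w := ⟨x - x₀, by simp⟩
  have hline : ∀ t : ℝ, HasDerivAt (fun t : ℝ => x₀ + t • w) w t := fun t => by
    simpa using ((hasDerivAt_id t).smul_const w).const_add x₀
  have hseg : ∀ t ∈ Icc (0 : ℝ) 1, x₀ + t • w ∈ ball x₀ r := fun t ht => by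
    simpa using (convex_ball x₀ r).add_smul_mem (mem_ball_self (pos_of_mem_ball hx)) hx ht
  have hDw : 0 < D w := by
    have : C / 2 * ‖w‖ ^ 2 < D w := by simpa [quadraticBarrier] using hpos
    exact (by positivity : 0 ≤ C / 2 * ‖w‖ ^ 2).trans_lt this
  have hderiv : ∀ t ∈ Ioo (0 : ℝ) 1, 0 < v (x₀ + t • w) →
      HasDerivAt (fun t : ℝ => v (x₀ + t • w)) (v' (x₀ + t • w) w) t := fun t ht hvt =>
    (hv' _ (hseg t (Ioo_subset_Icc_self ht)) hvt).1.comp_hasDerivAt t (hline t)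
  have hderiv_le : ∀ t ∈ Ioo (0 : ℝ) 1, 0 < v (x₀ + t • w) →
      D w - C * ‖w‖ ^ 2 * t ≤ v' (x₀ + t • w) w := fun t ht hvt =>
    sub_le_apply_of_norm_sub_le ht.1.le
      (by simpa using (hv' _ (hseg t (Ioo_subset_Icc_self ht)) hvt).2)
  have hle := le_of_hasDerivAt_le_of_pos (hv.comp (by fun_prop) hseg)
    (fun t _ => (hasDerivAt_quadraticBarrier_add_smul w t).continuousAt.continuousWithinAt)
    (by simp [hv₀]) (eventually_pos_add_smul hD hv₀ hDw)
    (fun t ht => quadraticBarrier_add_smul_pos hC hpos (Ioo_subset_Ioc_self ht))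
    hderiv (fun t _ => hasDerivAt_quadraticBarrier_add_smul w t) hderiv_le
  simpa using hle 1 (right_mem_Icc.2 zero_le_one)

lemma exists_eventually_max_quadraticBarrier_le (hv : ∀ᶠ y in 𝓝 x₀, ContinuousAt v y)
    (hD : HasFDerivAt v D x₀) (hD₀ : D ≠ 0) (hv₀ : v x₀ = 0)
    (hS : ∀ᶠ y in 𝓝 x₀, 0 < v y → S ∈ 𝓝 y) (hx₀ : x₀ ∈ S) (hv₂ : ContDiffWithinAt ℝ 2 v S x₀) :
    ∃ C, ∀ᶠ x in 𝓝 x₀, max (quadraticBarrier D C x₀ x) 0 ≤ max (v x) 0 := by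
  obtain ⟨v', C, hC, hv'⟩ := exists_eventually_hasFDerivWithinAt_norm_sub_le hv₂ hx₀
  have hv'₀ : v' x₀ = D := by
    have hS' : S ∈ 𝓝[{x | 0 < v x}] x₀ := by
      filter_upwards [nhdsWithin_le_nhds hS, self_mem_nhdsWithin] with y hy hvy
      exact mem_of_mem_nhds (hy hvy)
    have huniq : UniqueDiffWithinAt ℝ S x₀ :=
      ((uniqueDiffWithinAt_setOf_pos hD hv₀ hD₀).inter' hS').mono inter_subset_right
    exact huniq.eq (hv'.self_of_nhdsWithin hx₀).1 hD.hasFDerivWithinAt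
  obtain ⟨r, hr, hball⟩ := Metric.eventually_nhds_iff_ball.1
    (hv.and (hS.and (eventually_nhdsWithin_iff.1 hv')))
  have hderiv : ∀ y ∈ ball x₀ r, 0 < v y →
      HasFDerivAt v (v' y) y ∧ ‖v' y - D‖ ≤ C * ‖y - x₀‖ := by
    intro y hy hvy
    obtain ⟨-, hSy, hv'y⟩ := hball y hy
    obtain ⟨hfderiv, hnorm⟩ := hv'y (mem_of_mem_nhds (hSy hvy))
    exact ⟨hfderiv.hasFDerivAt (hSy hvy), hv'₀ ▸ hnorm⟩
  refine ⟨C, eventually_of_mem (ball_mem_nhds x₀ hr) fun x hx => max_le ?_ (le_max_right _ _)⟩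
  rcases le_or_gt (quadraticBarrier D C x₀ x) 0 with hneg | hpos
  · exact hneg.trans (le_max_right _ _)
  · exact (quadraticBarrier_le_of_norm_fderiv_sub_le hC
      (fun y hy => (hball y hy).1.continuousWithinAt) hD hv₀ hderiv hx hpos).trans (le_max_left _ _)

lemma exists_contDiff_eventuallyEq [HasContDiffBump F] {k : ℕ} {g : F → G}
    (hg : ContDiffAt ℝ k g x₀) : ∃ φ : F → G, ContDiff ℝ k φ ∧ φ =ᶠ[𝓝 x₀] g := by
  obtain ⟨r, hr, hball⟩ := Metric.eventually_nhds_iff_ball.1 (hg.eventually (by simp))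
  let χ : ContDiffBump x₀ := ⟨r / 4, r / 2, by positivity, by linarith⟩
  have hχ : tsupport χ ⊆ ball x₀ r := by
    rw [χ.tsupport_eq]
    exact closedBall_subset_ball (half_lt_self hr)
  refine ⟨fun x => χ x • g x, contDiff_iff_contDiffAt.2 fun x => ?_, ?_⟩
  · by_cases hx : x ∈ tsupport χ
    · exact χ.contDiffAt.smul (hball x (hχ hx))
    · refine (contDiffAt_const (c := (0 : G))).congr_of_eventuallyEq ?_
      filter_upwards [notMem_tsupport_iff_eventuallyEq.1 hx] with y hy
      simp [hy]
  · filter_upwards [χ.eventuallyEq_one] with y hy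
    simp [hy]

end NormedSpace

section InnerProductSpace

variable {F : Type*} [NormedAddCommGroup F] [InnerProductSpace ℝ F] (D : F →L[ℝ] ℝ) (C : ℝ) (x₀ : F)

lemma contDiff_quadraticBarrier {k : WithTop ℕ∞} : ContDiff ℝ k (quadraticBarrier D C x₀) := by
  have hsub : ContDiff ℝ k (fun x : F => x - x₀) := contDiff_id.sub contDiff_const
  exact (D.contDiff.comp hsub).sub (contDiff_const.mul (hsub.norm_sq ℝ))

lemma hasFDerivAt_quadraticBarrier : HasFDerivAt (quadraticBarrier D C x₀) D x₀ := by
  have hsub : HasFDerivAt (fun x : F => x - x₀) (ContinuousLinearMap.id ℝ F) x₀ :=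
    (hasFDerivAt_id x₀).sub_const x₀
  exact ((D.hasFDerivAt.comp x₀ hsub).sub (hsub.norm_sq.const_mul (C / 2))).congr_fderiv
    (by ext; simp)

lemma gradient_quadraticBarrier_fderiv [CompleteSpace F] (v : F → ℝ) :
    gradient (quadraticBarrier (fderiv ℝ v x₀) C x₀) x₀ = gradient v x₀ := by
  rw [gradient, gradient, (hasFDerivAt_quadraticBarrier _ C x₀).fderiv]

end InnerProductSpace

section FreeBoundary

variable {n : ℕ} {μ : ℝ} {Ω : Set (E n)} {f Q u v φ : E n → ℝ} {x₀ : E n}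

lemma lap_congr (h : u =ᶠ[𝓝 x₀] v) : lap u x₀ = lap v x₀ := by
  simp only [lap, (h.iteratedFDeriv ℝ 2).eq_of_nhds]

lemma isOpen_posSet (hΩ : IsOpen Ω) (hv : ContinuousOn v Ω) : IsOpen (posSet Ω v) :=
  hv.isOpen_inter_preimage hΩ isOpen_Ioi

lemma posSet_subset_posSet (h : ∀ x ∈ Ω, max (v x) 0 ≤ u x) : posSet Ω v ⊆ posSet Ω u :=
  fun x hx => ⟨hx.1, hx.2.trans_le ((le_max_left _ _).trans (h x hx.1))⟩

lemma eq_zero_of_mem_freeBdry (hΩ : IsOpen Ω) (hv : ContinuousOn v Ω) (hx₀ : x₀ ∈ freeBdry Ω v) :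
    v x₀ = 0 := by
  obtain ⟨⟨hclosure, hinterior⟩, hmem⟩ := hx₀
  rw [(isOpen_posSet hΩ hv).interior_eq] at hinterior
  refine le_antisymm (not_lt.1 fun hpos => hinterior ⟨hmem, hpos⟩) (not_lt.1 fun hneg => ?_)
  have hev : ∀ᶠ x in 𝓝 x₀, v x < 0 :=
    (hv.continuousAt (hΩ.mem_nhds hmem)).eventually (gt_mem_nhds hneg)
  obtain ⟨x, hx, hxneg⟩ := ((mem_closure_iff_frequently.1 hclosure).and_eventually hev).exists
  exact hx.2.not_gt hxneg

lemma mem_freeBdry_of_eq_zero (h : posSet Ω v ⊆ posSet Ω u) (hx₀ : x₀ ∈ freeBdry Ω v)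
    (hu₀ : u x₀ = 0) : x₀ ∈ freeBdry Ω u :=
  ⟨⟨closure_mono h hx₀.1.1, fun hmem => (interior_subset hmem).2.ne' hu₀⟩, hx₀.2⟩

lemma StrictCompSubsol.contDiffAt (hv : StrictCompSubsol μ Ω f Q v) (hΩ : IsOpen Ω)
    (hx₀ : x₀ ∈ posSet Ω v) : ContDiffAt ℝ 2 v x₀ :=
  hv.2.1.contDiffAt (mem_of_superset ((isOpen_posSet hΩ hv.1).mem_nhds hx₀) subset_closure)

lemma StrictCompSubsol.exists_max_quadraticBarrier_le
    (hv : StrictCompSubsol μ Ω f Q v) (hΩ : IsOpen Ω) (hx₀ : x₀ ∈ freeBdry Ω v)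
    (hgrad : gradient v x₀ ≠ 0) :
    ∃ C, ∀ᶠ x in 𝓝 x₀, max (quadraticBarrier (fderiv ℝ v x₀) C x₀ x) 0 ≤ max (v x) 0 := by
  obtain ⟨hv_cont, hv₂, -, -⟩ := hv
  -- `gradient` is zero by convention where `v` is not differentiable, so `hgrad` yields
  -- differentiability across `F(v)`.
  have hdiff : DifferentiableAt ℝ v x₀ :=
    not_imp_comm.1 gradient_eq_zero_of_not_differentiableAt hgrad
  have hfderiv : fderiv ℝ v x₀ ≠ 0 := fun h₀ => hgrad (by rw [gradient, h₀, map_zero])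
  have hx₀_closure : x₀ ∈ closure (posSet Ω v) := hx₀.1.1
  refine exists_eventually_max_quadraticBarrier_le ?_ hdiff.hasFDerivAt hfderiv
    (eq_zero_of_mem_freeBdry hΩ hv_cont hx₀) ?_ hx₀_closure (hv₂ x₀ hx₀_closure) <;>
    filter_upwards [hΩ.mem_nhds hx₀.2] with y hy
  · exact hv_cont.continuousAt (hΩ.mem_nhds hy)
  · exact fun hpos =>
      mem_of_superset ((isOpen_posSet hΩ hv_cont).mem_nhds ⟨hy, hpos⟩) subset_closure

/-- Viscosity supersolutions of `|∇u|^μ Δu = f` in `Ω⁺(u)`, `|∇u| = Q` on `F(u)`: the half of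
`ViscSol` that tests with functions touching from below. -/
def IsViscSupersol (μ : ℝ) (Ω : Set (E n)) (f Q u : E n → ℝ) : Prop :=
  (∀ φ : E n → ℝ, ContDiff ℝ 2 φ → ∀ x₀ ∈ posSet Ω u, TouchesBelow u φ x₀ →
      ‖gradient φ x₀‖ ^ μ * lap φ x₀ ≤ f x₀) ∧
  (∀ φ : E n → ℝ, ContDiff ℝ 2 φ → ∀ x₀ ∈ freeBdry Ω u, gradient φ x₀ ≠ 0 →
      TouchesBelow u (fun x => max (φ x) 0) x₀ → ‖gradient φ x₀‖ ≤ Q x₀)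

lemma ViscSol.isViscSupersol (hu : ViscSol μ Ω f Q u) : IsViscSupersol μ Ω f Q u :=
  ⟨fun φ hφ x₀ hx₀ => (hu.1 φ hφ x₀ hx₀).1, fun φ hφ x₀ hx₀ hgrad => (hu.2 φ hφ x₀ hx₀ hgrad).1⟩

lemma IsViscSupersol.le_of_contDiffAt (hu : IsViscSupersol μ Ω f Q u) (hx₀ : x₀ ∈ posSet Ω u)
    (hφ : ContDiffAt ℝ 2 φ x₀) (htouch : TouchesBelow u φ x₀) :
    ‖gradient φ x₀‖ ^ μ * lap φ x₀ ≤ f x₀ := by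
  obtain ⟨ψ, hψ, hψφ⟩ := exists_contDiff_eventuallyEq (k := 2) hφ
  have htouch_ψ : TouchesBelow u ψ x₀ :=
    ⟨htouch.1.trans hψφ.eq_of_nhds.symm, (htouch.2.and hψφ).mono fun x hx => hx.2.trans_le hx.1⟩
  have := hu.1 ψ hψ x₀ hx₀ htouch_ψ
  rwa [hψφ.gradient_eq, lap_congr hψφ] at this

lemma IsViscSupersol.lt_of_mem_posSet (hu : IsViscSupersol μ Ω f Q u)
    (hv : StrictCompSubsol μ Ω f Q v) (hΩ : IsOpen Ω) (h : ∀ x ∈ Ω, max (v x) 0 ≤ u x)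
    (hx₀ : x₀ ∈ posSet Ω v) : v x₀ < u x₀ := by
  have hvu : ∀ x ∈ Ω, v x ≤ u x := fun x hx => (le_max_left _ _).trans (h x hx)
  refine (hvu x₀ hx₀.1).lt_of_ne fun heq => ?_
  have htouch : TouchesBelow u v x₀ := ⟨heq.symm, eventually_of_mem (hΩ.mem_nhds hx₀.1) hvu⟩
  exact (hv.2.2.1 x₀ hx₀).not_ge
    (hu.le_of_contDiffAt (posSet_subset_posSet h hx₀) (hv.contDiffAt hΩ hx₀) htouch)

lemma IsViscSupersol.pos_of_mem_freeBdry (hu : IsViscSupersol μ Ω f Q u)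
    (hv : StrictCompSubsol μ Ω f Q v) (hΩ : IsOpen Ω) (h : ∀ x ∈ Ω, max (v x) 0 ≤ u x)
    (hx₀ : x₀ ∈ freeBdry Ω v) (hQ : 0 ≤ Q x₀) : 0 < u x₀ := by
  refine ((le_max_right _ _).trans (h x₀ hx₀.2)).lt_of_ne' fun hu₀ => ?_
  have hQ_lt : Q x₀ < ‖gradient v x₀‖ := hv.2.2.2 x₀ hx₀
  have hgrad : gradient v x₀ ≠ 0 := norm_pos_iff.1 (hQ.trans_lt hQ_lt)
  obtain ⟨C, hC⟩ := hv.exists_max_quadraticBarrier_le hΩ hx₀ hgrad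
  set φ := quadraticBarrier (fderiv ℝ v x₀) C x₀ with hφ
  have hgrad_φ : gradient φ x₀ = gradient v x₀ := gradient_quadraticBarrier_fderiv C x₀ v
  have htouch : TouchesBelow u (fun x => max (φ x) 0) x₀ := by
    refine ⟨by simp [hφ, hu₀], ?_⟩
    filter_upwards [hC, hΩ.mem_nhds hx₀.2] with x hx hxΩ
    exact hx.trans (h x hxΩ)
  have hle := hu.2 φ (contDiff_quadraticBarrier _ C x₀) x₀
    (mem_freeBdry_of_eq_zero (posSet_subset_posSet h) hx₀ hu₀) (hgrad_φ ▸ hgrad) htouch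
  rw [hgrad_φ] at hle
  exact hQ_lt.not_ge hle

theorem comparison_principle_general (hΩ : IsOpen Ω) (hQ : ∀ x ∈ Ω, 0 ≤ Q x)
    (hu : IsViscSupersol μ Ω f Q u) (hv : StrictCompSubsol μ Ω f Q v)
    (h : ∀ x ∈ Ω, max (v x) 0 ≤ u x) :
    ∀ x ∈ posSet Ω v ∪ freeBdry Ω v, max (v x) 0 < u x := by
  rintro x (hx | hx)
  · rw [max_eq_left hx.2.le]
    exact hu.lt_of_mem_posSet hv hΩ h hx
  · rw [eq_zero_of_mem_freeBdry hΩ hv.1 hx, max_self]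
    exact hu.pos_of_mem_freeBdry hv hΩ h hx (hQ x hx.2)

end FreeBoundary

/-- Lemma 2.4: comparison principle. -/
theorem comparison_principle
    (n : ℕ) (μ : ℝ) (hμ : 0 ≤ μ) (Ω : Set (E n)) (hΩ : IsOpen Ω)
    (f Q u v : E n → ℝ)
    (hf_bdd : ∃ M : ℝ, ∀ x ∈ Ω, |f x| ≤ M)
    (hf_cont : ContinuousOn f Ω)
    (hQ_cont : ContinuousOn Q Ω)
    (hQ_nonneg : ∀ x ∈ Ω, 0 ≤ Q x)
    (hu_cont : ContinuousOn u Ω)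
    (hu_nonneg : ∀ x ∈ Ω, 0 ≤ u x)
    (hu : ViscSol μ Ω f Q u)
    (hv : StrictCompSubsol μ Ω f Q v)
    (h : ∀ x ∈ Ω, max (v x) 0 ≤ u x) :
    ∀ x ∈ posSet Ω v ∪ freeBdry Ω v, max (v x) 0 < u x := by
  exact comparison_principle_general hΩ hQ_nonneg hu.isViscSupersol hv h
end
end

section
/- Let n ≥ 1, ε₀ > 0, C > 0, r̄ ∈ (0,1), let (ν_k)_{k≥0} be unit vectors in ℝⁿ with |ν_{k+1} − ν_k| ≤ C ε₀ 2^{−k} for all k ≥ 0, and let S ⊆ ℝⁿ be a set such that for every k ≥ 0 and every x ∈ S with |x| ≤ r̄^k one has |⟨x, ν_k⟩| ≤ ε₀ 2^{−k} r̄^k. Set γ = ln 2 / ln(1/r̄). Then the limit ν := lim_{k→∞} ν_k exists with |ν_k − ν| ≤ 2C ε₀ 2^{−k} for all k, and there is a constant C' depending only on C and r̄ such that |⟨x, ν⟩| ≤ C' ε₀ |x|^{1+γ} for every x ∈ S with 0 < |x| ≤ 1. -/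
open Metric Set Filter
open scoped RealInnerProductSpace Topology

noncomputable section

/-!
The increments of `ν k` are summable with a geometric tail, so `ν k` converges and
`‖ν k - νlim‖ = O(a⁻ᵏ)`. Given `x ≠ 0` in the unit ball, choose the scale `k` with
`r ^ (k + 1) < ‖x‖ ≤ r ^ k`. At that scale the flatness hypothesis bounds `⟪x, ν k⟫` by
`O(a⁻ᵏ ‖x‖)`, and replacing `ν k` by `νlim` costs another `O(a⁻ᵏ ‖x‖)`. The exponent `γ` is defined
by `r ^ γ = a⁻¹`, so that `a⁻ᵏ = (r ^ k) ^ γ` is comparable to `‖x‖ ^ γ`.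
-/

theorem rpow_log_div_log_one_div {r a : ℝ} (hr : 0 < r) (hr1 : r ≠ 1) (ha : 0 < a) :
    r ^ (Real.log a / Real.log (1 / r)) = a⁻¹ := by
  rw [one_div, Real.log_inv, div_neg, Real.rpow_neg hr.le, Real.log_div_log,
    Real.rpow_logb hr hr1 ha]

theorem exists_le_pow_and_pow_le_div_and_inv_pow_le {r a γ t : ℝ} (hr : 0 < r) (hr1 : r < 1)
    (hγ : 0 ≤ γ) (hrγ : r ^ γ = a⁻¹) (ht : 0 < t) (ht1 : t ≤ 1) :
    ∃ k : ℕ, t ≤ r ^ k ∧ r ^ k ≤ t / r ∧ (a ^ k)⁻¹ ≤ a * t ^ γ := by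
  obtain ⟨k, hlow, hup⟩ := exists_nat_pow_near_of_lt_one ht ht1 hr hr1
  have ha : 0 < a := inv_pos.mp (hrγ ▸ Real.rpow_pos_of_pos hr γ)
  refine ⟨k, hup, (le_div_iff₀ hr).mpr (pow_succ r k ▸ hlow.le), ?_⟩
  calc (a ^ k)⁻¹ = a * (r ^ γ) ^ (k + 1) := by rw [hrγ, inv_pow, pow_succ]; field_simp
    _ = a * (r ^ (k + 1)) ^ γ := by rw [Real.rpow_pow_comm hr.le]
    _ ≤ a * t ^ γ := by gcongr

theorem exists_tendsto_norm_sub_le_of_norm_succ_sub_le {V : Type*} [SeminormedAddCommGroup V]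
    [CompleteSpace V] {a D : ℝ} {ν : ℕ → V} (ha : 1 < a)
    (hν : ∀ k, ‖ν (k + 1) - ν k‖ ≤ D / a ^ k) :
    ∃ νlim, Tendsto ν atTop (𝓝 νlim) ∧ ∀ k, ‖ν k - νlim‖ ≤ a / (a - 1) * D / a ^ k := by
  have hdist : ∀ k, dist (ν k) (ν (k + 1)) ≤ D * a⁻¹ ^ k := fun k ↦ by
    rw [dist_comm, dist_eq_norm, inv_pow, ← div_eq_mul_inv]
    exact hν k
  have ha_inv : a⁻¹ < 1 := inv_lt_one_of_one_lt₀ ha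
  obtain ⟨νlim, hlim⟩ :=
    cauchySeq_tendsto_of_complete (cauchySeq_of_le_geometric _ _ ha_inv hdist)
  refine ⟨νlim, hlim, fun k ↦ ?_⟩
  have ha0 : a ≠ 0 := by positivity
  have ha1 : a - 1 ≠ 0 := sub_ne_zero.mpr ha.ne'
  calc ‖ν k - νlim‖ = dist (ν k) νlim := (dist_eq_norm _ _).symm
    _ ≤ D * a⁻¹ ^ k / (1 - a⁻¹) := dist_le_of_le_geometric_of_tendsto _ _ ha_inv hdist hlim k
    _ = a / (a - 1) * D / a ^ k := by rw [inv_pow]; field_simp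

section InnerProduct

variable {𝕜 H : Type*} [RCLike 𝕜] [SeminormedAddCommGroup H] [InnerProductSpace 𝕜 H]

theorem norm_inner_le_norm_inner_add_norm_mul_norm_sub (x v w : H) :
    ‖inner 𝕜 x w‖ ≤ ‖inner 𝕜 x v‖ + ‖x‖ * ‖v - w‖ :=
  calc ‖inner 𝕜 x w‖ = ‖inner 𝕜 x v - inner 𝕜 x (v - w)‖ := by
        rw [inner_sub_right, sub_sub_cancel]
    _ ≤ ‖inner 𝕜 x v‖ + ‖inner 𝕜 x (v - w)‖ := norm_sub_le _ _
    _ ≤ ‖inner 𝕜 x v‖ + ‖x‖ * ‖v - w‖ := by gcongr; exact norm_inner_le_norm _ _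

theorem norm_inner_le_rpow_of_forall_norm_inner_le {r a γ ε B : ℝ} {ν : ℕ → H} {w x : H}
    (hr : 0 < r) (hr1 : r < 1) (hγ : 0 ≤ γ) (hrγ : r ^ γ = a⁻¹)
    (hw : ∀ k, ‖ν k - w‖ ≤ B / a ^ k)
    (hflat : ∀ k, ‖x‖ ≤ r ^ k → ‖inner 𝕜 x (ν k)‖ ≤ ε / a ^ k * r ^ k)
    (hx : 0 < ‖x‖) (hx1 : ‖x‖ ≤ 1) :
    ‖inner 𝕜 x w‖ ≤ a * (ε / r + B) * ‖x‖ ^ (1 + γ) := by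
  obtain ⟨k, hxk, hk, hak⟩ :=
    exists_le_pow_and_pow_le_div_and_inv_pow_le hr hr1 hγ hrγ hx hx1
  have ha : 0 < a := inv_pos.mp (hrγ ▸ Real.rpow_pos_of_pos hr γ)
  have hε : 0 ≤ ε := by simpa using (norm_nonneg _).trans (hflat 0 (by simpa using hx1))
  have hB : 0 ≤ B := by simpa using (norm_nonneg _).trans (hw 0)
  calc ‖inner 𝕜 x w‖ ≤ ‖inner 𝕜 x (ν k)‖ + ‖x‖ * ‖ν k - w‖ :=
        norm_inner_le_norm_inner_add_norm_mul_norm_sub x (ν k) w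
    _ ≤ ε / a ^ k * (‖x‖ / r) + ‖x‖ * (B / a ^ k) := by
        gcongr
        · exact (hflat k hxk).trans (by gcongr)
        · exact hw k
    _ = (ε / r + B) * ‖x‖ * (a ^ k)⁻¹ := by ring
    _ ≤ (ε / r + B) * ‖x‖ * (a * ‖x‖ ^ γ) := by gcongr
    _ = a * (ε / r + B) * ‖x‖ ^ (1 + γ) := by rw [Real.rpow_one_add' hx.le (by positivity)]; ring

theorem geometric_decay_lemma_general [CompleteSpace H] {r a ε D : ℝ} {ν : ℕ → H} {S : Set H}
    (hr : 0 < r) (hr1 : r < 1) (ha : 1 < a)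
    (hν : ∀ k, ‖ν (k + 1) - ν k‖ ≤ D / a ^ k)
    (hflat : ∀ k, ∀ x ∈ S, ‖x‖ ≤ r ^ k → ‖inner 𝕜 x (ν k)‖ ≤ ε / a ^ k * r ^ k) :
    ∃ νlim : H, Tendsto ν atTop (𝓝 νlim) ∧
      (∀ k, ‖ν k - νlim‖ ≤ a / (a - 1) * D / a ^ k) ∧
      ∀ x ∈ S, 0 < ‖x‖ → ‖x‖ ≤ 1 →
        ‖inner 𝕜 x νlim‖ ≤
          a * (ε / r + a / (a - 1) * D) * ‖x‖ ^ (1 + Real.log a / Real.log (1 / r)) := by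
  obtain ⟨νlim, hlim, hdist⟩ := exists_tendsto_norm_sub_le_of_norm_succ_sub_le ha hν
  have hγ : 0 ≤ Real.log a / Real.log (1 / r) :=
    div_nonneg (Real.log_nonneg ha.le) (Real.log_nonneg (one_lt_one_div hr hr1).le)
  have hrγ := rpow_log_div_log_one_div hr hr1.ne (zero_lt_one.trans ha)
  exact ⟨νlim, hlim, hdist, fun x hx ↦
    norm_inner_le_rpow_of_forall_norm_inner_le hr hr1 hγ hrγ hdist (fun k ↦ hflat k x hx)⟩

end InnerProduct

/-- abstract geometric lemma behind the `C^{1,γ}` decay.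
Here `γ = ln 2 / ln(1/r̄)`, i.e. `2⁻¹ = r̄^γ`. -/
theorem geometric_decay_lemma (C rb : ℝ) (hC : 0 < C) (hrb : 0 < rb) (hrb1 : rb < 1) :
    ∃ C' : ℝ, 0 < C' ∧
      ∀ (n : ℕ), 1 ≤ n →
        ∀ (ε₀ : ℝ) (ν : ℕ → E n) (S : Set (E n)),
          0 < ε₀ →
          (∀ k : ℕ, ‖ν k‖ = 1) →
          (∀ k : ℕ, ‖ν (k + 1) - ν k‖ ≤ C * ε₀ / 2 ^ k) →
          (∀ k : ℕ, ∀ x ∈ S, ‖x‖ ≤ rb ^ k → |⟪x, ν k⟫| ≤ ε₀ / 2 ^ k * rb ^ k) →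
          ∃ νlim : E n,
            Tendsto ν atTop (𝓝 νlim) ∧
            (∀ k : ℕ, ‖ν k - νlim‖ ≤ 2 * C * ε₀ / 2 ^ k) ∧
            ∀ x ∈ S, 0 < ‖x‖ → ‖x‖ ≤ 1 →
              |⟪x, νlim⟫| ≤ C' * ε₀ * ‖x‖ ^ (1 + Real.log 2 / Real.log (1 / rb)) := by
  refine ⟨2 * (1 / rb + 2 * C), by positivity, fun n _ ε₀ ν S _ _ hν hflat ↦ ?_⟩
  obtain ⟨νlim, hlim, hdist, hdecay⟩ :=
    geometric_decay_lemma_general (𝕜 := ℝ) hrb hrb1 one_lt_two hν hflat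
  exact ⟨νlim, hlim, fun k ↦ (hdist k).trans_eq (by ring),
    fun x hx hx0 hx1 ↦ (hdecay x hx hx0 hx1).trans_eq (by ring)⟩
end
end
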